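/- arXiv:1412.0628 — 3 statements merged into one kernel-verified Lean document; each statement's English description precedes it below -/
import Mathlib

section
/- For every integer k ≥ 4 and every integer n ≥ 3, in the k-regular graph game starting from the empty graph on n vertices, the first player has a strategy ensuring that the final graph contains a Hamiltonian cycle (a cycle passing through all n vertices). -/
/-!
The first player grows a single path `P` from `x` to `y`, keeping after each of her moves the
invariant (`PathInv`): every vertex off `P` is isolated, `deg x ≤ 1` and `deg y ≤ 2`.

After a reply of the opponent, she restores it by one edge at an end of the path, whose degree is
then still at most `3 < k`:
* if the reply joins two vertices `u`, `v` off `P`, she plays `yu`, and `P` absorbs both;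
* if it joins an inner vertex of `P` to `w` off `P`, she plays `yw`; the new end `w` has degree `2`;
* if it joins an end of `P` to a vertex off `P`, the path has become longer for free; in this case,
  as for a reply inside `P`, she extends `P` to a further isolated vertex (which becomes an end of
  degree `1`), or closes `P` to a Hamiltonian cycle if no vertex is left (`extend_or_close`).

In the extension step the end not extended has degree at most `2` and the new end degree `1`, so the
ends exchange their roles. A position satisfying the invariant without a Hamiltonian cycle is not
terminal, and a Hamiltonian cycle survives the addition of edges, so the final graph has one.
-/

open SimpleGraph

namespace GraphGame

/-- The degree of a vertex, defined via the cardinality of its neighbor set. -/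
noncomputable def deg {V : Type} (G : SimpleGraph V) (v : V) : ℕ :=
  (G.neighborSet v).ncard

/-- The graph obtained from `G` by adding the edge between `u` and `v`. -/
def addEdge {V : Type} (G : SimpleGraph V) (u v : V) : SimpleGraph V :=
  G ⊔ SimpleGraph.fromEdgeSet {s(u, v)}

/-- A legal move in the `k`-regular graph game: draw an edge between two distinct
non-adjacent vertices, so that afterwards every vertex still has degree at most `k`. -/
def LegalMove {V : Type} (k : ℕ) (G : SimpleGraph V) (u v : V) : Prop :=
  u ≠ v ∧ ¬ G.Adj u v ∧ ∀ w, deg (addEdge G u v) w ≤ k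

/-- A position is terminal when no legal move remains. -/
def Terminal {V : Type} (k : ℕ) (G : SimpleGraph V) : Prop :=
  ∀ u v, ¬ LegalMove k G u v

/-- A strategy (a choice of an edge to draw at every position) is valid if it assigns a
legal move to every non-terminal position. -/
def ValidStrategy {V : Type} (k : ℕ) (s : SimpleGraph V → V × V) : Prop :=
  ∀ G : SimpleGraph V, ¬ Terminal k G → LegalMove k G (s G).1 (s G).2

/-- `IsPlay k r s G₀ g` : `g` is a play of the `k`-regular graph game starting from `G₀`
in which the player moving at steps `i` with `i % 2 = r` (so `r = 0` for the first player
and `r = 1` for the second player) follows the strategy `s`, and the opponent moves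
arbitrarily (legally).  Once a terminal position is reached the sequence stays constant. -/
def IsPlay {V : Type} (k r : ℕ) (s : SimpleGraph V → V × V) (G₀ : SimpleGraph V)
    (g : ℕ → SimpleGraph V) : Prop :=
  g 0 = G₀ ∧ ∀ i : ℕ,
    (Terminal k (g i) → g (i + 1) = g i) ∧
    (¬ Terminal k (g i) →
      (i % 2 = r → g (i + 1) = addEdge (g i) (s (g i)).1 (s (g i)).2) ∧
      (i % 2 ≠ r → ∃ u v, LegalMove k (g i) u v ∧ g (i + 1) = addEdge (g i) u v))

/-- The player moving at steps `≡ r (mod 2)` has a strategy ensuring that the final graph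
(i.e. the terminal graph reached at the end of every play) satisfies `P`. -/
def Ensures {V : Type} (k r : ℕ) (G₀ : SimpleGraph V) (P : SimpleGraph V → Prop) : Prop :=
  ∃ s : SimpleGraph V → V × V, ValidStrategy k s ∧
    ∀ g : ℕ → SimpleGraph V, IsPlay k r s G₀ g →
      ∀ n, Terminal k (g n) → P (g n)

/-- The player moving at steps `≡ r (mod 2)` has a strategy forcing the event that at some
stage the current graph satisfies `P`. -/
def Forces {V : Type} (k r : ℕ) (G₀ : SimpleGraph V) (P : SimpleGraph V → Prop) : Prop :=
  ∃ s : SimpleGraph V → V × V, ValidStrategy k s ∧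
    ∀ g : ℕ → SimpleGraph V, IsPlay k r s G₀ g → ∃ n, P (g n)

end GraphGame

namespace GraphGame

variable {V : Type}

/-! ### Degrees and legal moves -/

lemma addEdge_adj {G : SimpleGraph V} {u v a b : V} :
    (addEdge G u v).Adj a b ↔ G.Adj a b ∨ (a ≠ b ∧ (a = u ∧ b = v ∨ a = v ∧ b = u)) := by
  simp only [addEdge, sup_adj, fromEdgeSet_adj, Set.mem_singleton_iff, Sym2.eq_iff]
  tauto

lemma le_addEdge (G : SimpleGraph V) (u v : V) : G ≤ addEdge G u v := le_sup_left

lemma addEdge_comm (G : SimpleGraph V) (u v : V) : addEdge G u v = addEdge G v u := by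
  rw [addEdge, addEdge, Sym2.eq_swap]

lemma LegalMove.symm {k : ℕ} {G : SimpleGraph V} {u v : V} (h : LegalMove k G u v) :
    LegalMove k G v u :=
  ⟨h.1.symm, fun h' => h.2.1 h'.symm, by rw [addEdge_comm]; exact h.2.2⟩

lemma deg_addEdge_of_ne {G : SimpleGraph V} {u v w : V} (hu : w ≠ u) (hv : w ≠ v) :
    deg (addEdge G u v) w = deg G w := by
  unfold deg
  congr 1
  ext b
  simp only [mem_neighborSet, addEdge_adj]
  tauto

lemma deg_addEdge_le [Finite V] (G : SimpleGraph V) (u v w : V) :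
    deg (addEdge G u v) w ≤ deg G w + 1 := by
  classical
  unfold deg
  have hsub : (addEdge G u v).neighborSet w ⊆
      insert (if w = u then v else u) (G.neighborSet w) := by
    intro b
    simp only [mem_neighborSet, addEdge_adj, Set.mem_insert_iff]
    rintro (h | ⟨hne, ⟨rfl, rfl⟩ | ⟨rfl, rfl⟩⟩)
    · exact Or.inr h
    · simp
    · simp [hne]
  exact (Set.ncard_le_ncard hsub (Set.toFinite _)).trans (Set.ncard_insert_le _ _)

lemma not_adj_of_deg_eq_zero [Finite V] {G : SimpleGraph V} {z : V} (h : deg G z = 0) (a : V) :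
    ¬ G.Adj z a := by
  intro hza
  rw [deg, Set.ncard_eq_zero (Set.toFinite _)] at h
  exact Set.notMem_empty a (h ▸ hza)

lemma legalMove_of_deg_lt [Finite V] {k : ℕ} {G : SimpleGraph V} {a b : V} (hab : a ≠ b)
    (hadj : ¬ G.Adj a b) (hG : ∀ w, deg G w ≤ k) (ha : deg G a < k) (hb : deg G b < k) :
    LegalMove k G a b := by
  refine ⟨hab, hadj, fun w => ?_⟩
  by_cases hwa : w = a
  · subst hwa; have := deg_addEdge_le G w b w; omega
  by_cases hwb : w = b
  · subst hwb; have := deg_addEdge_le G a w w; omega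
  rw [deg_addEdge_of_ne hwa hwb]
  exact hG w

/-! ### The invariant -/

/-- The graph contains a Hamiltonian cycle. -/
def Ham [DecidableEq V] (G : SimpleGraph V) : Prop :=
  ∃ (v : V) (p : G.Walk v v), p.IsHamiltonianCycle

lemma Ham.mono [DecidableEq V] {G H : SimpleGraph V} (hGH : G ≤ H) (h : Ham G) : Ham H := by
  obtain ⟨v, p, hp⟩ := h
  exact ⟨v, p.map (.ofLE hGH), hp.map (f := .ofLE hGH) Function.bijective_id⟩

/-- `G` consists of a path from `x` to `y` through at least two vertices, some chords of that
path and isolated vertices; moreover `deg x ≤ i` and `deg y ≤ j`. -/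
structure PathState (i j : ℕ) (G : SimpleGraph V) (x y : V) : Prop where
  ne : x ≠ y
  exists_path : ∃ p : G.Walk x y, p.IsPath ∧ ∀ z, z ∉ p.support → deg G z = 0
  deg_left : deg G x ≤ i
  deg_right : deg G y ≤ j

/-- The invariant which the first player maintains after each of her moves. -/
def PathInv (k : ℕ) (G : SimpleGraph V) : Prop :=
  (∀ w, deg G w ≤ k) ∧ ∃ x y, PathState 1 2 G x y

/-- The positions that the first player aims at after her move. -/
def Good [DecidableEq V] (k : ℕ) (G : SimpleGraph V) : Prop := Ham G ∨ PathInv k G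

/-- The positions that the first player can handle when she is to move. -/
def Pre [DecidableEq V] (k : ℕ) (G : SimpleGraph V) : Prop :=
  Ham G ∨ ∃ a b, LegalMove k G a b ∧ Good k (addEdge G a b)

lemma ham_of_path [Fintype V] [DecidableEq V] (hV : 3 ≤ Fintype.card V) {G : SimpleGraph V}
    {x y : V} (p : G.Walk x y) (hp : p.IsPath) (hall : ∀ z, z ∈ p.support) (h : G.Adj y x) :
    Ham G := by
  have hham : p.IsHamiltonian := hp.isHamiltonian_of_mem hall
  have hlen := hham.length_eq
  refine ⟨y, Walk.cons h p, ?_⟩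
  rw [Walk.isHamiltonianCycle_iff_isCycle_and_support_count_tail_eq_one]
  refine ⟨?_, ?_⟩
  · rw [Walk.cons_isCycle_iff]
    refine ⟨hp, fun hmem => ?_⟩
    -- a path containing the edge between its own ends has length one
    have := hp.length_eq_one_of_mem_edges (Sym2.eq_swap ▸ hmem)
    omega
  · intro a
    simpa using hham a

/-! ### Restoring the invariant -/

/-- The path is lengthened at `y` by an isolated vertex, or closed if it is spanning. -/
lemma extend_or_close [Fintype V] [DecidableEq V] (hV : 3 ≤ Fintype.card V) {k : ℕ} (hk : 4 ≤ k)
    {G : SimpleGraph V} (hG : ∀ w, deg G w ≤ k) {x y : V} (h : PathState 2 3 G x y) :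
    Pre k G := by
  obtain ⟨hxy, ⟨p, hp, hout⟩, hx, hy⟩ := h
  by_cases hall : ∀ z, z ∈ p.support
  · by_cases hadj : G.Adj y x
    · exact Or.inl (ham_of_path hV p hp hall hadj)
    · refine Or.inr ⟨y, x, legalMove_of_deg_lt hxy.symm hadj hG (by omega) (by omega), Or.inl ?_⟩
      refine ham_of_path hV (p.mapLe (le_addEdge G y x)) (hp.mapLe _) (by simpa using hall) ?_
      exact addEdge_adj.2 (Or.inr ⟨hxy.symm, by simp⟩)
  · push Not at hall
    obtain ⟨z, hz⟩ := hall
    have hz0 := hout z hz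
    have hzx : x ≠ z := fun e => hz (e ▸ p.start_mem_support)
    have hzy : y ≠ z := fun e => hz (e ▸ p.end_mem_support)
    have hleg : LegalMove k G y z := legalMove_of_deg_lt hzy
      (fun h => not_adj_of_deg_eq_zero hz0 _ h.symm) hG (by omega) (by omega)
    refine Or.inr ⟨y, z, hleg, Or.inr ⟨hleg.2.2, z, x, hzx.symm, ?_, ?_, ?_⟩⟩
    · have hnew : (addEdge G y z).Adj z y := addEdge_adj.2 (Or.inr ⟨hzy.symm, by simp⟩)
      refine ⟨Walk.cons hnew (p.mapLe (le_addEdge G y z)).reverse, ?_, ?_⟩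
      · rw [Walk.cons_isPath_iff]
        exact ⟨(hp.mapLe _).reverse, by simpa using hz⟩
      · intro w hw
        simp only [Walk.support_cons, Walk.support_reverse, Walk.support_mapLe_eq_support,
          List.mem_cons, List.mem_reverse, not_or] at hw
        rw [deg_addEdge_of_ne (ne_of_mem_of_not_mem p.end_mem_support hw.2).symm hw.1]
        exact hout w hw.2
    · have := deg_addEdge_le G y z z; omega
    · rwa [deg_addEdge_of_ne hxy hzx]

/-- The reply `uv` with `u` on the path and `v` off it. -/
lemma pre_of_mem_notMem [Fintype V] [DecidableEq V] (hV : 3 ≤ Fintype.card V) {k : ℕ}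
    (hk : 4 ≤ k) {G : SimpleGraph V} {x y u v : V} (hxy : x ≠ y) (p : G.Walk x y) (hp : p.IsPath)
    (hout : ∀ z, z ∉ p.support → deg G z = 0) (hx : deg G x ≤ 1) (hy : deg G y ≤ 2)
    (hm : LegalMove k G u v) (hu : u ∈ p.support) (hv : v ∉ p.support) :
    Pre k (addEdge G u v) := by
  have hv0 := hout v hv
  have hvx : x ≠ v := fun e => hv (e ▸ p.start_mem_support)
  have hvy : y ≠ v := fun e => hv (e ▸ p.end_mem_support)
  have hdv : deg (addEdge G u v) v ≤ 1 := by have := deg_addEdge_le G u v v; omega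
  have hnew : (addEdge G u v).Adj v u := addEdge_adj.2 (Or.inr ⟨hm.1.symm, by simp⟩)
  have hout' : ∀ w, w ≠ v → w ∉ p.support → deg (addEdge G u v) w = 0 := fun w hwv hw => by
    rw [deg_addEdge_of_ne (ne_of_mem_of_not_mem hu hw).symm hwv]
    exact hout w hw
  by_cases huy : u = y
  · subst huy
    refine extend_or_close hV hk hm.2.2 (x := v) (y := x) ⟨hvx.symm, ?_, by omega, ?_⟩
    · refine ⟨Walk.cons hnew (p.mapLe (le_addEdge G u v)).reverse, ?_, ?_⟩
      · rw [Walk.cons_isPath_iff]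
        exact ⟨(hp.mapLe _).reverse, by simpa using hv⟩
      · intro w hw
        simp only [Walk.support_cons, Walk.support_reverse, Walk.support_mapLe_eq_support,
          List.mem_cons, List.mem_reverse, not_or] at hw
        exact hout' w hw.1 hw.2
    · rw [deg_addEdge_of_ne hxy hvx]; omega
  by_cases hux : u = x
  · subst hux
    refine extend_or_close hV hk hm.2.2 (x := v) (y := y) ⟨hvy.symm, ?_, by omega, ?_⟩
    · refine ⟨Walk.cons hnew (p.mapLe (le_addEdge G u v)), ?_, ?_⟩
      · rw [Walk.cons_isPath_iff]
        exact ⟨hp.mapLe _, by simpa using hv⟩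
      · intro w hw
        simp only [Walk.support_cons, Walk.support_mapLe_eq_support, List.mem_cons, not_or] at hw
        exact hout' w hw.1 hw.2
    · rw [deg_addEdge_of_ne (Ne.symm huy) hvy]; omega
  · have hdy : deg (addEdge G u v) y ≤ 2 := by rwa [deg_addEdge_of_ne (Ne.symm huy) hvy]
    have hdx : deg (addEdge G u v) x ≤ 1 := by rwa [deg_addEdge_of_ne (Ne.symm hux) hvx]
    have hnadj : ¬ (addEdge G u v).Adj y v := by
      rw [addEdge_adj]
      rintro (h | ⟨-, ⟨h, -⟩ | ⟨h, -⟩⟩)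
      · exact not_adj_of_deg_eq_zero hv0 _ h.symm
      · exact huy h.symm
      · exact hvy h
    have hleg : LegalMove k (addEdge G u v) y v :=
      legalMove_of_deg_lt hvy hnadj hm.2.2 (by omega) (by omega)
    refine Or.inr ⟨y, v, hleg, Or.inr ⟨hleg.2.2, x, v, hvx, ?_, ?_, ?_⟩⟩
    · have hyv : (addEdge (addEdge G u v) y v).Adj y v :=
        addEdge_adj.2 (Or.inr ⟨hvy, by simp⟩)
      have hle := (le_addEdge G u v).trans (le_addEdge (addEdge G u v) y v)
      refine ⟨(p.mapLe hle).concat hyv, ?_, ?_⟩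
      · exact (hp.mapLe _).concat (by simpa using hv) hyv
      · intro w hw
        simp only [Walk.support_concat, Walk.support_mapLe_eq_support, List.mem_append,
          List.mem_singleton, not_or] at hw
        rw [deg_addEdge_of_ne (ne_of_mem_of_not_mem p.end_mem_support hw.1).symm hw.2]
        exact hout' w hw.2 hw.1
    · rwa [deg_addEdge_of_ne hxy hvx]
    · have := deg_addEdge_le (addEdge G u v) y v v; omega

lemma Ham.pre [DecidableEq V] {k : ℕ} {G : SimpleGraph V} (h : Ham G) : Pre k G := Or.inl h

/-- Whatever the opponent replies to a good position, the first player can restore it. -/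
lemma Good.pre_addEdge [Fintype V] [DecidableEq V] (hV : 3 ≤ Fintype.card V) {k : ℕ} (hk : 4 ≤ k)
    {G : SimpleGraph V} (hG : Good k G) {u v : V} (hm : LegalMove k G u v) :
    Pre k (addEdge G u v) := by
  obtain hH | ⟨-, x, y, hxy, ⟨p, hp, hout⟩, hx, hy⟩ := hG
  · exact (hH.mono (le_addEdge G u v)).pre
  by_cases hu : u ∈ p.support <;> by_cases hv : v ∈ p.support
  · refine extend_or_close hV hk hm.2.2 (x := x) (y := y) ⟨hxy, ?_, ?_, ?_⟩
    · refine ⟨p.mapLe (le_addEdge G u v), hp.mapLe _, fun w hw => ?_⟩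
      rw [Walk.support_mapLe_eq_support] at hw
      rw [deg_addEdge_of_ne (ne_of_mem_of_not_mem hu hw).symm (ne_of_mem_of_not_mem hv hw).symm]
      exact hout w hw
    · have := deg_addEdge_le G u v x; omega
    · have := deg_addEdge_le G u v y; omega
  · exact pre_of_mem_notMem hV hk hxy p hp hout hx hy hm hu hv
  · rw [addEdge_comm]
    exact pre_of_mem_notMem hV hk hxy p hp hout hx hy hm.symm hv hu
  · have hxu : x ≠ u := fun e => hu (e ▸ p.start_mem_support)
    have hxv : x ≠ v := fun e => hv (e ▸ p.start_mem_support)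
    have hyu : y ≠ u := fun e => hu (e ▸ p.end_mem_support)
    have hyv : y ≠ v := fun e => hv (e ▸ p.end_mem_support)
    have hdu : deg (addEdge G u v) u ≤ 1 := by
      have := deg_addEdge_le G u v u; have := hout u hu; omega
    have hdv : deg (addEdge G u v) v ≤ 1 := by
      have := deg_addEdge_le G u v v; have := hout v hv; omega
    have hdx : deg (addEdge G u v) x ≤ 1 := by rwa [deg_addEdge_of_ne hxu hxv]
    have hdy : deg (addEdge G u v) y ≤ 2 := by rwa [deg_addEdge_of_ne hyu hyv]
    have hnadj : ¬ (addEdge G u v).Adj y u := by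
      rw [addEdge_adj]
      rintro (h | ⟨-, ⟨h, -⟩ | ⟨h, -⟩⟩)
      · exact not_adj_of_deg_eq_zero (hout u hu) _ h.symm
      · exact hyu h
      · exact hyv h
    have hleg : LegalMove k (addEdge G u v) y u :=
      legalMove_of_deg_lt hyu hnadj hm.2.2 (by omega) (by omega)
    refine Or.inr ⟨y, u, hleg, Or.inr ⟨hleg.2.2, x, v, hxv, ?_, ?_, ?_⟩⟩
    · have h1 : (addEdge (addEdge G u v) y u).Adj y u :=
        addEdge_adj.2 (Or.inr ⟨hyu, by simp⟩)
      have h2 : (addEdge (addEdge G u v) y u).Adj u v :=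
        le_addEdge _ _ _ (addEdge_adj.2 (Or.inr ⟨hm.1, by simp⟩))
      have hle := (le_addEdge G u v).trans (le_addEdge (addEdge G u v) y u)
      refine ⟨((p.mapLe hle).concat h1).concat h2, ?_, ?_⟩
      · refine ((hp.mapLe _).concat (by simpa using hu) h1).concat ?_ h2
        simpa [Walk.support_concat] using ⟨hv, hm.1.symm⟩
      · intro w hw
        simp only [Walk.support_concat, Walk.support_mapLe_eq_support, List.mem_append,
          List.mem_singleton, not_or] at hw
        rw [deg_addEdge_of_ne (ne_of_mem_of_not_mem p.end_mem_support hw.1.1).symm hw.1.2,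
          deg_addEdge_of_ne hw.1.2 hw.2]
        exact hout w hw.1.1
    · rwa [deg_addEdge_of_ne hxy hxu]
    · rw [deg_addEdge_of_ne hyv.symm hm.1.symm]; omega

/-- With `Pre.ham_of_terminal`: a good position without a Hamiltonian cycle is not terminal. -/
lemma Good.pre [Fintype V] [DecidableEq V] (hV : 3 ≤ Fintype.card V) {k : ℕ} (hk : 4 ≤ k)
    {G : SimpleGraph V} (hG : Good k G) : Pre k G := by
  obtain hH | ⟨hdeg, x, y, h⟩ := hG
  · exact hH.pre
  · exact extend_or_close hV hk hdeg
      ⟨h.ne, h.exists_path, h.deg_left.trans (by norm_num), h.deg_right.trans (by norm_num)⟩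

lemma Pre.ham_of_terminal [DecidableEq V] {k : ℕ} {G : SimpleGraph V} (h : Pre k G)
    (ht : Terminal k G) : Ham G := by
  obtain hH | ⟨a, b, hab, -⟩ := h
  · exact hH
  · exact absurd hab (ht a b)

lemma pre_bot [Fintype V] [DecidableEq V] (hV : 3 ≤ Fintype.card V) {k : ℕ} (hk : 4 ≤ k) :
    Pre k (⊥ : SimpleGraph V) := by
  have h0 : ∀ w, deg (⊥ : SimpleGraph V) w = 0 := fun w => by
    rw [deg, Set.ncard_eq_zero (Set.toFinite _)]
    ext b
    simp
  obtain ⟨a, b, hab⟩ := Fintype.exists_pair_of_one_lt_card (show 1 < Fintype.card V by omega)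
  have hleg : LegalMove k (⊥ : SimpleGraph V) a b :=
    legalMove_of_deg_lt hab (by simp) (by simp [h0]) (by rw [h0]; omega) (by rw [h0]; omega)
  refine Or.inr ⟨a, b, hleg, Or.inr ⟨hleg.2.2, a, b, hab, ?_, ?_, ?_⟩⟩
  · have hadj : (addEdge ⊥ a b).Adj a b := addEdge_adj.2 (Or.inr ⟨hab, by simp⟩)
    refine ⟨Walk.cons hadj Walk.nil, by simp [Walk.cons_isPath_iff, hab], fun w hw => ?_⟩
    simp only [Walk.support_cons, Walk.support_nil, List.mem_cons, List.not_mem_nil, or_false,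
      not_or] at hw
    rw [deg_addEdge_of_ne hw.1 hw.2, h0]
  · have := deg_addEdge_le (⊥ : SimpleGraph V) a b a; have := h0 a; omega
  · have := deg_addEdge_le (⊥ : SimpleGraph V) a b b; have := h0 b; omega

/-- The strategy: move to a good position whenever possible, and arbitrarily otherwise. -/
lemma exists_strategy [Nonempty V] [DecidableEq V] (k : ℕ) :
    ∃ s : SimpleGraph V → V × V, ValidStrategy k s ∧
      ∀ G, Pre k G → ¬ Terminal k G → Good k (addEdge G (s G).1 (s G).2) := by
  have key : ∀ G : SimpleGraph V, ∃ m : V × V, ¬ Terminal k G →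
      LegalMove k G m.1 m.2 ∧ (Pre k G → Good k (addEdge G m.1 m.2)) := by
    intro G
    by_cases ht : Terminal k G
    · exact ⟨Classical.arbitrary _, fun h => absurd ht h⟩
    by_cases hg : ∃ a b, LegalMove k G a b ∧ Good k (addEdge G a b)
    · obtain ⟨a, b, hab, hgood⟩ := hg
      exact ⟨(a, b), fun _ => ⟨hab, fun _ => hgood⟩⟩
    · obtain ⟨a, b, hab⟩ : ∃ a b, LegalMove k G a b := by
        by_contra hcon
        exact ht fun a b hab => hcon ⟨a, b, hab⟩
      refine ⟨(a, b), fun _ => ⟨hab, fun hpre => ?_⟩⟩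
      obtain hH | h := hpre
      · exact Or.inl (hH.mono (le_addEdge G a b))
      · exact absurd h hg
  choose s hs using key
  exact ⟨s, fun G ht => (hs G ht).1, fun G hp ht => (hs G ht).2 hp⟩

end GraphGame

open GraphGame in
/-- For every integer `k ≥ 4` and every `n ≥ 3`, in the `k`-regular graph game starting
from the empty graph on `n` vertices, the first player has a strategy ensuring that
the final graph contains a Hamiltonian cycle. -/
theorem first_player_can_force_hamiltonicity (k n : ℕ) (hk : 4 ≤ k) (hn : 3 ≤ n) :
    Ensures k 0 (⊥ : SimpleGraph (Fin n))
      (fun G => ∃ (v : Fin n) (p : G.Walk v v), p.IsHamiltonianCycle) := by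
  have hV : 3 ≤ Fintype.card (Fin n) := by simpa using hn
  have : Nonempty (Fin n) := ⟨⟨0, by omega⟩⟩
  obtain ⟨s, hs, hgood⟩ := exists_strategy (V := Fin n) k
  refine ⟨s, hs, fun g hg m hterm => ?_⟩
  have inv : ∀ i, (i % 2 = 0 → Pre k (g i)) ∧ (i % 2 ≠ 0 → Good k (g i)) := by
    intro i
    induction i with
    | zero =>
      refine ⟨fun _ => ?_, fun h => absurd rfl h⟩
      rw [hg.1]
      exact pre_bot hV hk
    | succ i ih =>
      obtain ⟨hstay, hmove⟩ := hg.2 i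
      refine ⟨fun hi => ?_, fun hi => ?_⟩
      · have hi' : i % 2 ≠ 0 := by omega
        by_cases ht : Terminal k (g i)
        · rw [hstay ht]
          exact (ih.2 hi').pre hV hk
        · obtain ⟨u, v, hm, he⟩ := (hmove ht).2 hi'
          rw [he]
          exact (ih.2 hi').pre_addEdge hV hk hm
      · have hi' : i % 2 = 0 := by omega
        by_cases ht : Terminal k (g i)
        · rw [hstay ht]
          exact Or.inl ((ih.1 hi').ham_of_terminal ht)
        · rw [(hmove ht).1 hi']
          exact hgood _ (ih.1 hi') ht
  by_cases hm : m % 2 = 0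
  · exact ((inv m).1 hm).ham_of_terminal hterm
  · exact (((inv m).2 hm).pre hV hk).ham_of_terminal hterm
end

section
/- Let G be a finite simple graph in which every vertex has degree at most 3, and let H be a spanning subgraph of G. Suppose x is a vertex and S is a connected component of H − x such that every vertex of S has degree 3 in H and x has exactly one or two neighbors (in H) lying in S, and suppose some vertex of G lies outside S ∪ {x}. Then G contains no Hamiltonian cycle. -/
/-!
Since every vertex of `S` already has degree 3 in `H`, all its `G`-edges are `H`-edges. Hence in
`G` an edge leaving `S` can only end in `x`, and likewise an edge leaving the complement of
`S ∪ {x}` can only end in `x`: the vertex `x` separates the two nonempty sets. A Hamiltonian cycle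
started at `x` is, after its first edge, a path ending in `x`; such a path stays on one side of
the separation until it reaches `x` (`mem_of_isPath_of_closed`), so it misses the other side.
-/

open SimpleGraph

/-- The degree of a vertex, defined via the cardinality of its neighbor set. -/
noncomputable def deg {V : Type} (G : SimpleGraph V) (v : V) : ℕ :=
  (G.neighborSet v).ncard

/-- A path ending in `x` that starts in a set `T` which can be left only through `x` stays in `T`
until it reaches `x`. -/
theorem mem_of_isPath_of_closed {V : Type} {G : SimpleGraph V} {x : V} {T : Set V}
    (hT : ∀ a b, a ∈ T → G.Adj a b → b ∈ T ∨ b = x) {u : V} (p : G.Walk u x) (hp : p.IsPath)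
    (hu : u ∈ T) : ∀ w ∈ p.support, w ≠ x → w ∈ T := by
  induction p with
  | nil => simp
  | @cons u v x h p ih =>
    rw [Walk.cons_isPath_iff] at hp
    intro w hw hwx
    rw [Walk.support_cons, List.mem_cons] at hw
    rcases hw with rfl | hw
    · exact hu
    · rcases hT _ _ hu h with hv | rfl
      · exact ih hT hp.1 hv w hw hwx
      · -- a path from `x` to `x` is trivial
        rw [Walk.isPath_iff_nil] at hp
        rw [Walk.nil_iff_support_eq.1 hp.1, List.mem_singleton] at hw
        exact absurd hw hwx

/-- Let `G` be a finite simple graph of maximum degree at most 3 and `H ≤ G` a spanning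
subgraph.  Suppose `x` is a vertex and `S` is a connected component of `H − x` (encoded as
a connected component, not containing `x`, of the graph obtained from `H` by deleting all
edges incident to `x`) such that every vertex of `S` has degree 3 in `H` and `x` has
exactly one or two `H`-neighbors in `S`, and suppose some vertex of `G` lies outside
`S ∪ {x}`.  Then `G` contains no Hamiltonian cycle. -/
theorem no_hamiltonian_cycle_of_eventual_cut_vertex
    (V : Type) [Fintype V] [DecidableEq V] (G H : SimpleGraph V) (hHG : H ≤ G)
    (hdeg : ∀ v, deg G v ≤ 3) (x : V)
    (S : Set V)
    (hS : ∃ c : (H.deleteEdges (H.incidenceSet x)).ConnectedComponent, S = c.supp)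
    (hxS : x ∉ S)
    (hnbr : (H.neighborSet x ∩ S).ncard = 1 ∨ (H.neighborSet x ∩ S).ncard = 2)
    (hdeg3 : ∀ v ∈ S, deg H v = 3)
    (hout : ∃ y : V, y ∉ S ∧ y ≠ x) :
    ¬ ∃ (v : V) (p : G.Walk v v), p.IsHamiltonianCycle := by
  rintro ⟨v, p, hp⟩
  obtain ⟨c, rfl⟩ := hS
  obtain ⟨y, hyS, hyx⟩ := hout
  obtain ⟨s, hs⟩ := c.nonempty_supp
  have hGH : ∀ a ∈ c.supp, ∀ b, G.Adj a b → H.Adj a b := by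
    intro a ha b hab
    have hsub : H.neighborSet a ⊆ G.neighborSet a := fun z hz => hHG hz
    have heq : H.neighborSet a = G.neighborSet a :=
      Set.eq_of_subset_of_ncard_le hsub ((hdeg a).trans (hdeg3 a ha).ge) (Set.toFinite _)
    have hb : b ∈ G.neighborSet a := hab
    rwa [← heq] at hb
  have hclosed : ∀ a b, a ∈ c.supp → G.Adj a b → b ∈ c.supp ∨ b = x := by
    intro a b ha hab
    by_cases hbx : b = x
    · exact Or.inr hbx
    · have hax : a ≠ x := fun h => hxS (h ▸ ha)
      have hadj : (H.deleteEdges (H.incidenceSet x)).Adj a b := by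
        rw [deleteEdges_adj]
        refine ⟨hGH a ha b hab, fun hmem => ?_⟩
        have := hmem.2
        rw [Sym2.mem_iff] at this
        rcases this with h | h
        · exact hax h.symm
        · exact hbx h.symm
      exact Or.inl (c.mem_supp_of_adj_mem_supp ha hadj)
  have hclosed' : ∀ a b, a ∈ (c.supp)ᶜ \ {x} → G.Adj a b → b ∈ (c.supp)ᶜ \ {x} ∨ b = x := by
    rintro a b ⟨ha, hax⟩ hab
    by_cases hbx : b = x
    · exact Or.inr hbx
    · refine Or.inl ⟨fun hb => ?_, hbx⟩
      rcases hclosed b a hb hab.symm with h | h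
      · exact ha h
      · exact hax h
  have hsx : s ≠ x := fun h => hxS (h ▸ hs)
  have hx : x ∈ p.support := hp.mem_support x
  have hqc : (p.rotate x hx).IsCycle := hp.isCycle.rotate hx
  have hqm : ∀ w, w ∈ (p.rotate x hx).support := fun w =>
    (Walk.mem_support_rotate_iff p x hx).2 (hp.mem_support w)
  generalize p.rotate x hx = q at hqc hqm
  cases q with
  | nil => exact hqc.ne_nil rfl
  | @cons _ a _ h q =>
    have hqp : q.IsPath := ((Walk.cons_isCycle_iff q h).1 hqc).1
    have hmem : ∀ w, w ≠ x → w ∈ q.support := fun w hw => by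
      have := hqm w
      rw [Walk.support_cons, List.mem_cons] at this
      exact this.resolve_left hw
    by_cases ha : a ∈ c.supp
    · exact hyS (mem_of_isPath_of_closed hclosed q hqp ha y (hmem y hyx) hyx)
    · exact (mem_of_isPath_of_closed hclosed' q hqp ⟨ha, h.ne'⟩ s (hmem s hsx) hsx).1 hs
end

section
/- Let k ≥ 4 be an integer and let G be a finite simple graph with maximum degree at most k whose set W of non-isolated vertices is nonempty, such that the induced subgraph of G on W has a Hamiltonian path whose two endpoints x₁ and x₂ satisfy deg_G(x₁) = 1 and deg_G(x₂) ≤ 2. Let e be any edge joining two distinct non-adjacent vertices each of degree strictly less than k in G, and suppose that G + e has at least one isolated vertex. Then there exists an edge f joining two distinct non-adjacent vertices each of degree strictly less than k in G + e, such that in G + e + f the induced subgraph on the non-isolated vertices has a Hamiltonian path one of whose endpoints has degree 1 in G + e + f and whose other endpoint has degree at most 2 in G + e + f. -/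
/-!
Let `P` be the given Hamiltonian path from `x₁` to `x₂`, let `e = uv`, and let `z` be isolated in
`G + e`. The edge `f` is chosen so that `P` can be prolonged to the new Hamiltonian path, according
to which ends of `e` are isolated in `G`.

* Neither end isolated: `f = x₂z`, path `P, z`. Here `z` has degree 1, and `x₁` has degree at most 2
  because only `e` may have raised its degree.
* Both isolated: `f = x₂u`, path `P, u, v`.
* Only `v` isolated and `u = x₁`: `f = x₂z`, path `v, P, z`.
* Only `v` isolated and `u = x₂`: `f = vz`, path `P, v, z`.
* Only `v` isolated and `u ≠ x₁, x₂`: `f = x₂v`, path `P, v`. Here `x₁` keeps degree 1, and `v` has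
  the two neighbours `u` and `x₂`.

In each case `f` has its ends of degree at most 3 in `G + e`, so `k ≥ 4` suffices.
The argument is carried out with paths in the ambient graph whose support is the set of vertices of
positive degree; `HasHamPath.exists_induce` translates back to the induced subgraph.
-/

open SimpleGraph

/-- The graph obtained from `G` by adding the edge between `u` and `v`. -/
def addEdge {V : Type} (G : SimpleGraph V) (u v : V) : SimpleGraph V :=
  G ⊔ SimpleGraph.fromEdgeSet {s(u, v)}

/-- Walk-level form of the invariant: a path of `H` whose vertices are exactly the non-isolated
vertices of `H`, with one end of degree 1 and the other of degree at most 2. -/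
def HasHamPath {V : Type} (H : SimpleGraph V) : Prop :=
  ∃ (y₁ y₂ : V) (q : H.Walk y₁ y₂), q.IsPath ∧ (∀ w, w ∈ q.support ↔ 0 < deg H w) ∧
    deg H y₁ = 1 ∧ deg H y₂ ≤ 2

lemma HasHamPath.exists_induce {V : Type} [DecidableEq V] {H : SimpleGraph V}
    (h : HasHamPath H) :
    ∃ (y₁ y₂ : ({w : V | 0 < deg H w} : Set V)) (q : (H.induce {w : V | 0 < deg H w}).Walk y₁ y₂),
      q.IsHamiltonian ∧ deg H (y₁ : V) = 1 ∧ deg H (y₂ : V) ≤ 2 := by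
  obtain ⟨y₁, y₂, q, hq, hs, h1, h2⟩ := h
  have hmem : ∀ w ∈ q.support, w ∈ {w : V | 0 < deg H w} := fun w hw => (hs w).1 hw
  refine ⟨⟨y₁, hmem _ q.start_mem_support⟩, ⟨y₂, hmem _ q.end_mem_support⟩, q.induce _ hmem,
    ?_, h1, h2⟩
  apply Walk.IsPath.isHamiltonian_of_mem
  · apply Walk.IsPath.of_map (f := (Embedding.induce _).toHom)
    rw [Walk.map_induce]
    exact hq
  · rintro ⟨w, hw⟩
    rw [Walk.support_induce]
    simpa using (hs w).2 hw

lemma deg_pos_of_adj {V : Type} [Fintype V] {G : SimpleGraph V} {a b : V} (h : G.Adj a b) :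
    0 < deg G a :=
  (Set.ncard_pos (Set.toFinite _)).2 ⟨b, h⟩

lemma addEdge_adj {V : Type} {G : SimpleGraph V} {u v a b : V} :
    (addEdge G u v).Adj a b ↔
      G.Adj a b ∨ (a ≠ b ∧ ((a = u ∧ b = v) ∨ (a = v ∧ b = u))) := by
  simp [addEdge]
  tauto

lemma addEdge_comm {V : Type} (G : SimpleGraph V) (u v : V) : addEdge G u v = addEdge G v u := by
  rw [addEdge, addEdge, Sym2.eq_swap]

lemma le_addEdge {V : Type} (G : SimpleGraph V) (u v : V) : G ≤ addEdge G u v := le_sup_left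

lemma deg_addEdge {V : Type} [Fintype V] [DecidableEq V] {G : SimpleGraph V} {u v : V}
    (huv : u ≠ v) (hadj : ¬ G.Adj u v) (w : V) :
    deg (addEdge G u v) w = deg G w + if w = u ∨ w = v then 1 else 0 := by
  unfold deg
  by_cases hwu : w = u
  · subst hwu
    have : (addEdge G w v).neighborSet w = insert v (G.neighborSet w) := by
      ext b
      simp only [mem_neighborSet, addEdge_adj, Set.mem_insert_iff]
      grind
    rw [this, Set.ncard_insert_of_notMem (show v ∉ G.neighborSet w from hadj) (Set.toFinite _)]
    simp
  · by_cases hwv : w = v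
    · subst hwv
      have : (addEdge G u w).neighborSet w = insert u (G.neighborSet w) := by
        ext b
        simp only [mem_neighborSet, addEdge_adj, Set.mem_insert_iff]
        grind
      rw [this, Set.ncard_insert_of_notMem
        (show u ∉ G.neighborSet w from fun h => hadj h.symm) (Set.toFinite _)]
      simp
    · have : (addEdge G u v).neighborSet w = G.neighborSet w := by
        ext b
        simp only [mem_neighborSet, addEdge_adj]
        grind
      simp [this, hwu, hwv]

/-- The case where `u` is not isolated in `G` or both ends of `uv` are isolated; the remaining
case follows by exchanging `u` and `v`. -/
lemma exists_edge_of_walk {V : Type} [Fintype V] [DecidableEq V] {G : SimpleGraph V}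
    {k : ℕ} (hk : 4 ≤ k) {x₁ x₂ : V} (p : G.Walk x₁ x₂) (hp : p.IsPath)
    (hs : ∀ w, w ∈ p.support ↔ 0 < deg G w)
    (h1 : deg G x₁ = 1) (h2 : deg G x₂ ≤ 2)
    {u v : V} (huv : u ≠ v) (hadj : ¬ G.Adj u v)
    {z : V} (hz : deg (addEdge G u v) z = 0) (hor : 0 < deg G u ∨ deg G v = 0) :
    ∃ a b : V, a ≠ b ∧ ¬ (addEdge G u v).Adj a b ∧
      deg (addEdge G u v) a < k ∧ deg (addEdge G u v) b < k ∧
      HasHamPath (addEdge (addEdge G u v) a b) := by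
  have hne : x₁ ≠ x₂ := by
    rintro rfl
    obtain rfl := Walk.isPath_iff_nil.1 hp |>.eq_nil
    obtain ⟨w, hw⟩ : (G.neighborSet x₁).Nonempty :=
      (Set.ncard_pos (Set.toFinite _)).1 (by change 0 < deg G x₁; omega)
    have := (hs w).2 (deg_pos_of_adj hw.symm)
    simp only [Walk.support_nil, List.mem_singleton] at this
    exact G.ne_of_adj hw this.symm
  have hx₂ : 0 < deg G x₂ := (hs _).1 p.end_mem_support
  have hd := deg_addEdge huv hadj
  have hzd := hd z
  have hzu : z ≠ u := by rintro rfl; simp [hz] at hzd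
  have hzv : z ≠ v := by rintro rfl; simp [hz] at hzd
  have hz0 : deg G z = 0 := by omega
  have hzx₂ : x₂ ≠ z := by rintro rfl; omega
  have hzx₁ : x₁ ≠ z := by rintro rfl; omega
  have hzs : z ∉ p.support := fun h => by have := (hs z).1 h; omega
  have hzadj : ∀ a, ¬ (addEdge G u v).Adj a z := fun a h => by
    have := deg_pos_of_adj h.symm; omega
  -- lifting `P` to the graph with both edges added
  have lift : ∀ a b, ∃ q : (addEdge (addEdge G u v) a b).Walk x₁ x₂,
      q.IsPath ∧ q.support = p.support := fun a b =>
    ⟨p.mapLe ((le_addEdge _ _ _).trans (le_addEdge _ _ _)), hp.mapLe _,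
      Walk.support_mapLe_eq_support _ _⟩
  by_cases hv0 : deg G v = 0
  · have hvx₁ : x₁ ≠ v := by rintro rfl; omega
    have hvx₂ : x₂ ≠ v := by rintro rfl; omega
    have hvs : v ∉ p.support := fun h => by have := (hs v).1 h; omega
    have hvn : ∀ a, ¬ G.Adj a v := fun a h => by have := deg_pos_of_adj h.symm; omega
    by_cases hu0 : deg G u = 0
    · -- both ends isolated: `P, u, v`
      have hux₁ : x₁ ≠ u := by rintro rfl; omega
      have hux₂ : x₂ ≠ u := by rintro rfl; omega
      have hus : u ∉ p.support := fun h => by have := (hs u).1 h; omega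
      have hun : ∀ a, ¬ G.Adj a u := fun a h => by have := deg_pos_of_adj h.symm; omega
      have hn : ¬ (addEdge G u v).Adj x₂ u := by rw [addEdge_adj]; grind
      have hd' := deg_addEdge hux₂ hn
      refine ⟨x₂, u, hux₂, hn, by grind, by grind, ?_⟩
      obtain ⟨q, hq, hqs⟩ := lift x₂ u
      have e1 : (addEdge (addEdge G u v) x₂ u).Adj x₂ u := by simp only [addEdge_adj]; grind
      have e2 : (addEdge (addEdge G u v) x₂ u).Adj u v := by simp only [addEdge_adj]; grind
      refine ⟨x₁, v, (q.concat e1).concat e2,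
        (hq.concat (by rwa [hqs]) e1).concat ?_ e2, fun w => ?_, by grind, by grind⟩
      · simp [Walk.support_concat, hqs, hvs, huv.symm]
      · simp only [Walk.support_concat, hqs, List.mem_append,
          List.mem_singleton]
        grind
    · by_cases hux₁ : u = x₁
      · -- `v, P, z`
        subst hux₁
        have hd' := deg_addEdge hzx₂ (hzadj x₂)
        refine ⟨x₂, z, hzx₂, hzadj _, by grind, by grind, ?_⟩
        obtain ⟨q, hq, hqs⟩ := lift x₂ z
        have e1 : (addEdge (addEdge G u v) x₂ z).Adj x₂ z := by simp only [addEdge_adj]; grind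
        have e2 : (addEdge (addEdge G u v) x₂ z).Adj v u := by simp only [addEdge_adj]; grind
        refine ⟨v, z, (q.concat e1).cons e2,
          (hq.concat (by rwa [hqs]) e1).cons ?_, fun w => ?_, by grind, by grind⟩
        · simp [Walk.support_concat, hqs, hvs, hzv.symm]
        · simp only [Walk.support_cons, Walk.support_concat, hqs, List.mem_append,
            List.mem_cons]
          grind
      · by_cases hux₂ : u = x₂
        · -- `P, v, z`
          subst hux₂
          have hd' := deg_addEdge hzv.symm (hzadj v)
          refine ⟨v, z, hzv.symm, hzadj _, by grind, by grind, ?_⟩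
          obtain ⟨q, hq, hqs⟩ := lift v z
          have e1 : (addEdge (addEdge G u v) v z).Adj u v := by simp only [addEdge_adj]; grind
          have e2 : (addEdge (addEdge G u v) v z).Adj v z := by simp only [addEdge_adj]; grind
          refine ⟨x₁, z, (q.concat e1).concat e2,
            (hq.concat (by rwa [hqs]) e1).concat ?_ e2, fun w => ?_, by grind, by grind⟩
          · simp [Walk.support_concat, hqs, hzs, hzv]
          · simp only [Walk.support_concat, hqs, List.mem_append,
              List.mem_singleton]
            grind
        · -- `P, v`
          have hn : ¬ (addEdge G u v).Adj x₂ v := by rw [addEdge_adj]; grind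
          have hd' := deg_addEdge hvx₂ hn
          refine ⟨x₂, v, hvx₂, hn, by grind, by grind, ?_⟩
          obtain ⟨q, hq, hqs⟩ := lift x₂ v
          have e1 : (addEdge (addEdge G u v) x₂ v).Adj x₂ v := by simp only [addEdge_adj]; grind
          refine ⟨x₁, v, q.concat e1, hq.concat (by rwa [hqs]) e1, fun w => ?_,
            by grind, by grind⟩
          simp only [Walk.support_concat, hqs, List.mem_append,
            List.mem_singleton]
          grind
  · -- neither end isolated: `P, z`, read from `z` since `x₁` may have degree 2
    have hu0 : 0 < deg G u := by omega
    have hd' := deg_addEdge hzx₂ (hzadj x₂)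
    refine ⟨x₂, z, hzx₂, hzadj _, by grind, by grind, ?_⟩
    obtain ⟨q, hq, hqs⟩ := lift x₂ z
    have e1 : (addEdge (addEdge G u v) x₂ z).Adj x₂ z := by simp only [addEdge_adj]; grind
    refine ⟨z, x₁, (q.concat e1).reverse, (hq.concat (by rwa [hqs]) e1).reverse, fun w => ?_,
      by grind, by grind⟩
    simp only [Walk.support_reverse, List.mem_reverse, Walk.support_concat, hqs, List.mem_append,
      List.mem_singleton]
    grind

/-- Let `k ≥ 4` and let `G` be a finite simple graph with maximum degree at most `k` whose
set of non-isolated vertices is nonempty and induces a subgraph having a Hamiltonian path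
whose endpoints `x₁, x₂` satisfy `deg x₁ = 1` and `deg x₂ ≤ 2` (degrees in `G`).  If `e = uv`
is any edge joining two distinct non-adjacent vertices of degree `< k` and `G + e` still has
an isolated vertex, then some further edge `f = ab` (joining distinct non-adjacent vertices
of degree `< k` in `G + e`) can be added so that in `G + e + f` the induced subgraph on the
non-isolated vertices again has a Hamiltonian path with one endpoint of degree 1 and the
other of degree at most 2. -/
theorem hamiltonian_path_invariant_maintained
    (k : ℕ) (hk : 4 ≤ k) (V : Type) [Fintype V] [DecidableEq V] (G : SimpleGraph V)
    (hdeg : ∀ v, deg G v ≤ k)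
    (hW : ({v : V | 0 < deg G v}).Nonempty)
    (x₁ x₂ : ({v : V | 0 < deg G v} : Set V))
    (p : (G.induce {v : V | 0 < deg G v}).Walk x₁ x₂) (hp : p.IsHamiltonian)
    (h1 : deg G (x₁ : V) = 1) (h2 : deg G (x₂ : V) ≤ 2)
    (u v : V) (huv : u ≠ v) (hadj : ¬ G.Adj u v)
    (hu : deg G u < k) (hv : deg G v < k)
    (hiso : ∃ z : V, deg (addEdge G u v) z = 0) :
    ∃ a b : V, a ≠ b ∧ ¬ (addEdge G u v).Adj a b ∧
      deg (addEdge G u v) a < k ∧ deg (addEdge G u v) b < k ∧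
      ∃ (y₁ y₂ : ({w : V | 0 < deg (addEdge (addEdge G u v) a b) w} : Set V))
        (q : ((addEdge (addEdge G u v) a b).induce
            {w : V | 0 < deg (addEdge (addEdge G u v) a b) w}).Walk y₁ y₂),
        q.IsHamiltonian ∧
        deg (addEdge (addEdge G u v) a b) (y₁ : V) = 1 ∧
        deg (addEdge (addEdge G u v) a b) (y₂ : V) ≤ 2 := by
  obtain ⟨z, hz⟩ := hiso
  have hmap : (p.map (Embedding.induce _).toHom).IsPath :=
    hp.isPath.map (Embedding.induce (G := G) {v : V | 0 < deg G v}).injective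
  have hs : ∀ w, w ∈ (p.map (Embedding.induce _).toHom).support ↔ 0 < deg G w := by
    intro w
    rw [Walk.support_map, List.mem_map]
    constructor
    · rintro ⟨y, -, rfl⟩
      exact y.2
    · exact fun hw => ⟨⟨w, hw⟩, hp.mem_support _, rfl⟩
  suffices h : ∃ a b : V, a ≠ b ∧ ¬ (addEdge G u v).Adj a b ∧
      deg (addEdge G u v) a < k ∧ deg (addEdge G u v) b < k ∧
      HasHamPath (addEdge (addEdge G u v) a b) by
    obtain ⟨a, b, hab, hn, ha, hb, hH⟩ := h
    exact ⟨a, b, hab, hn, ha, hb, hH.exists_induce⟩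
  by_cases hor : 0 < deg G u ∨ deg G v = 0
  · exact exists_edge_of_walk hk _ hmap hs h1 h2 huv hadj hz hor
  · rw [addEdge_comm] at hz ⊢
    exact exists_edge_of_walk hk _ hmap hs h1 h2 huv.symm (fun h => hadj h.symm) hz (by omega)
end
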